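/- arXiv:2109.04099 — 3 statements merged into one kernel-verified Lean document; each statement's English description precedes it below -/
import Mathlib

section
/- Let F be a forest, v a vertex of F, and suppose the edges incident to v are pre-colored with at most two colors. Then this partial coloring extends to a 2-edge-coloring of all of F such that at every vertex w ≠ v, every color appearing at w appears an odd number of times at w. -/
open SimpleGraph Finset

variable {V : Type*} [Fintype V] [DecidableEq V]

/-- Number of edges incident to `v` receiving color `i` under the edge-coloring `f`. -/
def colorCount (G : SimpleGraph V) [DecidableRel G.Adj] {k : ℕ}
    (f : Sym2 V → Fin k) (v : V) (i : Fin k) : ℕ :=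
  ((G.incidenceFinset v).filter (fun e => f e = i)).card

/-- The edge-coloring `f` is odd at the vertex `v`: every color appearing at `v`
appears an odd number of times at `v`. -/
def OddAt (G : SimpleGraph V) [DecidableRel G.Adj] {k : ℕ}
    (f : Sym2 V → Fin k) (v : V) : Prop :=
  ∀ i : Fin k, colorCount G f v i = 0 ∨ Odd (colorCount G f v i)

/-- An odd edge-coloring: odd at every vertex. -/
def IsOddColoring (G : SimpleGraph V) [DecidableRel G.Adj] {k : ℕ}
    (f : Sym2 V → Fin k) : Prop :=
  ∀ v : V, OddAt G f v

/-- The odd chromatic index: least `k` admitting an odd `k`-edge-coloring. -/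
noncomputable def oddChromIndex (G : SimpleGraph V) [DecidableRel G.Adj] : ℕ :=
  sInf {k | ∃ f : Sym2 V → Fin k, IsOddColoring G f}

/-!
Build up the vertex set starting from `v`, adding each new vertex `w` so that it has at most one
neighbor among the earlier ones. In a forest such an order exists: every finite set of at least two
vertices contains some `w ≠ v` of degree at most one in the forest it induces (an endpoint of a
longest path, or any `w ≠ v` if there are no edges). When `w` is added, at most one edge at `w` has
a prescribed color, say `c`. If the degree of `w` is odd, color the remaining edges at `w` with `c`;
if it is even, color them with one other color, so that `c` occurs once and the other color an odd
number of times. Edges at earlier vertices keep their colors.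
-/

section Leaves

variable {W : Type*} {G : SimpleGraph W}

theorem subsingleton_neighborSet_of_forall_isPath_length_le (hG : G.IsAcyclic) {a b : W}
    {p : G.Walk a b} (hp : p.IsPath)
    (hmax : ∀ (c : W) (q : G.Walk c b), q.IsPath → q.length ≤ p.length) :
    (G.neighborSet a).Subsingleton := by
  have eq_snd : ∀ x, G.Adj a x → x = p.snd := by
    intro x hx
    refine hG.eq_snd_of_adj_start hp hx (by_contra fun hxp => ?_)
    have := hmax x (.cons hx.symm p) (hp.cons hxp)
    rw [Walk.length_cons] at this
    lia
  exact fun x hx y hy => (eq_snd x hx).trans (eq_snd y hy).symm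

theorem exists_ne_subsingleton_neighborSet [Nontrivial W] [Finite G.edgeSet] (hG : G.IsAcyclic)
    (v : W) : ∃ w ≠ v, (G.neighborSet w).Subsingleton := by
  obtain ⟨a, b, p, hp, hmax⟩ := Walk.exists_isPath_forall_isPath_length_le_length G
  have start_leaf : (G.neighborSet a).Subsingleton :=
    subsingleton_neighborSet_of_forall_isPath_length_le hG hp fun c => hmax c b
  have end_leaf : (G.neighborSet b).Subsingleton :=
    subsingleton_neighborSet_of_forall_isPath_length_le hG hp.reverse fun c q hq =>
      (hmax c a q hq).trans_eq p.length_reverse.symm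
  by_cases ha : a = v
  · by_cases hb : b = v
    · subst ha hb
      obtain ⟨w, hw⟩ := exists_ne b
      have no_edge : ∀ x, ¬ G.Adj w x := by
        intro x hx
        have := hmax w x hx.toWalk (.of_adj hx)
        rw [Walk.length_eq_zero_iff.mpr (Walk.isPath_iff_nil.mp hp), Walk.length_cons] at this
        lia
      exact ⟨w, hw, fun x hx => (no_edge x hx).elim⟩
    · exact ⟨b, hb, end_leaf⟩
  · exact ⟨a, ha, start_leaf⟩

theorem exists_mem_ne_subsingleton_neighborSet_inter (hG : G.IsAcyclic) {S : Set W}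
    (hS : S.Finite) {v : W} (hv : v ∈ S) (hne : S.Nontrivial) :
    ∃ w ∈ S, w ≠ v ∧ (G.neighborSet w ∩ S).Subsingleton := by
  have := hS.to_subtype
  have := hne.coe_sort
  obtain ⟨w, hwv, hw⟩ := exists_ne_subsingleton_neighborSet (hG.induce S) ⟨v, hv⟩
  refine ⟨w, w.2, fun h => hwv (Subtype.ext h), fun x hx y hy => ?_⟩
  exact congrArg Subtype.val
    (hw (show (G.induce S).Adj w ⟨x, hx.2⟩ from hx.1) (show (G.induce S).Adj w ⟨y, hy.2⟩ from hy.1))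

theorem subsingleton_iUnion_incidenceSet_inter {S : Set W} {w : W} (hwS : w ∉ S)
    (hw : (G.neighborSet w ∩ S).Subsingleton) :
    ((⋃ x ∈ S, G.incidenceSet x) ∩ G.incidenceSet w).Subsingleton := by
  have edge_eq : ∀ e ∈ (⋃ x ∈ S, G.incidenceSet x) ∩ G.incidenceSet w,
      ∃ x ∈ G.neighborSet w ∩ S, e = s(w, x) := by
    rintro e ⟨heS, hew⟩
    obtain ⟨x, hxS, hex⟩ := Set.mem_iUnion₂.mp heS
    have hwx : w ≠ x := fun h => hwS (h ▸ hxS)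
    exact ⟨x, ⟨G.adj_of_mem_incidenceSet hwx hew hex, hxS⟩,
      G.incidenceSet_inter_incidenceSet_subset hwx ⟨hew, hex⟩⟩
  intro e he e' he'
  obtain ⟨x, hx, rfl⟩ := edge_eq e he
  obtain ⟨y, hy, rfl⟩ := edge_eq e' he'
  rw [hw hx hy]

end Leaves

section Fibers

variable {α κ : Type*} [DecidableEq κ] [Nontrivial κ] (E : Finset α)

theorem exists_apply_eq_card_fiber_eq_zero_or_odd {a : α} (ha : a ∈ E) (c : κ) :
    ∃ f : α → κ, f a = c ∧ ∀ i, #{e ∈ E | f e = i} = 0 ∨ Odd #{e ∈ E | f e = i} := by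
  classical
  rcases Nat.even_or_odd #E with hE | hE
  · obtain ⟨d, hdc⟩ := exists_ne c
    have fiber_c : {e ∈ E | Function.update (fun _ => d) a c e = c} = {a} := by
      grind
    have fiber_d : {e ∈ E | Function.update (fun _ => d) a c e = d} = E.erase a := by
      grind
    refine ⟨Function.update (fun _ => d) a c, Function.update_self .., fun i => ?_⟩
    by_cases hic : i = c
    · simp [hic, fiber_c]
    by_cases hid : i = d
    · rw [hid, fiber_d, card_erase_of_mem ha]
      exact .inr (Nat.Even.sub_odd (card_pos.mpr ⟨a, ha⟩) hE odd_one)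
    · exact .inl (card_eq_zero.mpr (filter_eq_empty_iff.mpr (by grind)))
  · refine ⟨fun _ => c, rfl, fun i => ?_⟩
    by_cases hci : c = i <;> simp [hci, hE]

theorem exists_eqOn_card_fiber_eq_zero_or_odd {T : Set α} (hT : (T ∩ E).Subsingleton)
    (f : α → κ) :
    ∃ f' : α → κ, Set.EqOn f' f T ∧
      ∀ i, #{e ∈ E | f' e = i} = 0 ∨ Odd #{e ∈ E | f' e = i} := by
  classical
  rcases E.eq_empty_or_nonempty with rfl | hE
  · exact ⟨f, Set.eqOn_refl f T, by simp⟩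
  obtain ⟨a, ha, haT⟩ : ∃ a ∈ E, ∀ e ∈ T ∩ E, e = a := by
    rcases (T ∩ E).eq_empty_or_nonempty with hTE | ⟨a, ha⟩
    · exact hE.imp fun a ha => ⟨ha, by simp [hTE]⟩
    · exact ⟨a, ha.2, fun e he => hT he ha⟩
  obtain ⟨h, hha, hodd⟩ := exists_apply_eq_card_fiber_eq_zero_or_odd E ha (f a)
  refine ⟨T.piecewise f h, Set.piecewise_eqOn T f h, fun i => ?_⟩
  have eq_on_E : ∀ e ∈ E, T.piecewise f h e = h e := by
    intro e he
    by_cases heT : e ∈ T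
    · rw [Set.piecewise_eq_of_mem _ _ _ heT, haT e ⟨heT, he⟩, hha]
    · exact Set.piecewise_eq_of_notMem _ _ _ heT
  rw [filter_congr fun e he => by rw [eq_on_E e he]]
  exact hodd i

end Fibers

section OddAt

variable {G : SimpleGraph V} [DecidableRel G.Adj] {k : ℕ}

theorem oddAt_congr {f f' : Sym2 V → Fin k} {w : V} (h : Set.EqOn f f' (G.incidenceSet w)) :
    OddAt G f w ↔ OddAt G f' w := by
  have count_eq : ∀ i, colorCount G f w i = colorCount G f' w i := fun i =>
    congrArg card (filter_congr fun e he => by rw [h ((mem_incidenceFinset ..).mp he)])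
  simp only [OddAt, count_eq]

theorem exists_eqOn_oddAt [Nontrivial (Fin k)] {T : Set (Sym2 V)} {w : V}
    (hT : (T ∩ G.incidenceSet w).Subsingleton) (f : Sym2 V → Fin k) :
    ∃ f' : Sym2 V → Fin k, Set.EqOn f' f T ∧ OddAt G f' w :=
  exists_eqOn_card_fiber_eq_zero_or_odd (G.incidenceFinset w)
    (by rwa [coe_incidenceFinset]) f

theorem exists_eqOn_incidenceSet_oddAt_of_mem [Nontrivial (Fin k)] (hG : G.IsAcyclic) {v : V}
    (g : Sym2 V → Fin k) (S : Finset V) (hv : v ∈ S) :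
    ∃ f : Sym2 V → Fin k, Set.EqOn f g (G.incidenceSet v) ∧ ∀ w ∈ S, w ≠ v → OddAt G f w := by
  induction S using Finset.eraseInduction with
  | _ S ih =>
  by_cases hS : (S : Set V).Nontrivial
  · obtain ⟨w, hwS, hwv, hw⟩ :=
      exists_mem_ne_subsingleton_neighborSet_inter hG S.finite_toSet hv hS
    have hvw : v ∈ S.erase w := mem_erase.mpr ⟨hwv.symm, hv⟩
    obtain ⟨f, hfg, hf⟩ := ih w hwS hvw
    obtain ⟨f', hf'f, hf'w⟩ := exists_eqOn_oddAt (subsingleton_iUnion_incidenceSet_inter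
      (notMem_erase w S) (hw.anti (by gcongr; exact erase_subset w S))) f
    have unchanged : ∀ z ∈ S.erase w, Set.EqOn f' f (G.incidenceSet z) := fun z hz =>
      hf'f.mono (Set.subset_biUnion_of_mem (u := fun x => G.incidenceSet x) hz)
    refine ⟨f', (unchanged v hvw).trans hfg, fun z hz hzv => ?_⟩
    by_cases hzw : z = w
    · rwa [hzw]
    · have hz' : z ∈ S.erase w := mem_erase.mpr ⟨hzw, hz⟩
      exact (oddAt_congr (unchanged z hz')).mpr (hf z hz' hzv)
  · exact ⟨g, Set.eqOn_refl g _, fun w hw hwv => (hS ⟨w, hw, v, hv, hwv⟩).elim⟩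

end OddAt

theorem forest_local_coloring_extends_general (G : SimpleGraph V) [DecidableRel G.Adj]
    (hF : G.IsAcyclic) (v : V) {k : ℕ} (hk : 2 ≤ k) (g : Sym2 V → Fin k) :
    ∃ f : Sym2 V → Fin k, (∀ e ∈ G.incidenceSet v, f e = g e) ∧
      ∀ w : V, w ≠ v → OddAt G f w := by
  have := Fin.nontrivial_iff_two_le.mpr hk
  obtain ⟨f, hfg, hf⟩ := exists_eqOn_incidenceSet_oddAt_of_mem hF g univ (mem_univ v)
  exact ⟨f, hfg, fun w => hf w (mem_univ w)⟩

theorem forest_local_coloring_extends (G : SimpleGraph V) [DecidableRel G.Adj]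
    (hF : G.IsAcyclic) (v : V) (g : Sym2 V → Fin 2) :
    ∃ f : Sym2 V → Fin 2, (∀ e ∈ G.incidenceSet v, f e = g e) ∧
      ∀ w : V, w ≠ v → OddAt G f w :=
  forest_local_coloring_extends_general G hF v le_rfl g
end

section
/- Every connected loopless graph G containing a bridge (i.e., with edge-connectivity 1) satisfies χ'_o(G) ≤ 3. -/
open SimpleGraph Finset

variable {V : Type*} [Fintype V] [DecidableEq V]

/-!
Every vertex `z` of a connected graph `G` admits a `3`-edge-coloring that is odd away from `z`:
inside a spanning tree one finds a forest `F` such that `G - F` has odd degree at every vertex other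
than `z`; the edges outside `F` get one color and `F` gets an odd coloring with the other two.
A forest has an odd `2`-edge-coloring because odd colorings chosen at each vertex separately become
compatible after exchanging the two colors at some of the vertices: there is no cycle around which
these exchanges could fail to be consistent.

For a bridge `uv`, use on the side of `u` a coloring that is odd away from `v` and on the side of
`v` one that is odd away from `u`, after permuting the colors so that the two agree on `uv`.
-/

section Forest

variable {W A : Type*} [AddGroup A] {F : SimpleGraph W}

theorem sum_darts_eq_sum_darts_add_of_adj (hF : F.IsAcyclic) {h : W → W → A}
    (hanti : ∀ a b, h b a = -h a b) {r a b : W} {p : F.Walk r a} {q : F.Walk r b} (hp : p.IsPath)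
    (hq : q.IsPath) (hab : F.Adj a b) :
    (q.darts.map fun d => h d.fst d.snd).sum =
      (p.darts.map fun d => h d.fst d.snd).sum + h a b := by
  by_cases ha : a ∈ q.support
  · simp [hF.path_concat hp hq hab ha, Walk.darts_concat]
  · have hb := hF.mem_support_of_ne_mem_support_of_adj_of_isPath hp hq hab ha
    simp [hF.path_concat hq hp hab.symm hb, Walk.darts_concat, hanti a b]

theorem exists_potential_of_isAcyclic (hF : F.IsAcyclic) {h : W → W → A}
    (hanti : ∀ a b, h b a = -h a b) :
    ∃ c : W → A, ∀ a b, F.Adj a b → c b = c a + h a b := by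
  let root (a : W) : W := (F.connectedComponentMk a).out
  have hroot (a : W) : F.Reachable (root a) a :=
    ConnectedComponent.exact (F.connectedComponentMk a).out_eq
  choose p hp using fun a => (hroot a).exists_isPath
  refine ⟨fun a => ((p a).darts.map fun d => h d.fst d.snd).sum, fun a b hab => ?_⟩
  have hab_root : root b = root a :=
    congrArg Quot.out (ConnectedComponent.connectedComponentMk_eq_of_adj hab).symm
  simpa using sum_darts_eq_sum_darts_add_of_adj hF hanti (hp a)
    (((p b).isPath_copy hab_root rfl).2 (hp b)) hab

end Forest

section EdgeWeights

variable {W A : Type*} [DecidableEq W] [AddCommGroup A] {G : SimpleGraph W} [G.LocallyFinite]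

theorem exists_sum_incidenceFinset_eq_ite {v r : W} (p : G.Walk v r) (t : A) :
    ∃ x : Sym2 W → A, ∀ w ≠ r, ∑ e ∈ G.incidenceFinset w, x e = if w = v then t else 0 := by
  induction p generalizing t with
  | nil => exact ⟨0, fun w hw => by simp [hw]⟩
  | @cons a b _ hab _ ih =>
    -- The weights alternate between `t` and `-t` along `p`, so they cancel at its inner vertices.
    obtain ⟨x, hx⟩ := ih (-t)
    refine ⟨fun e => x e + if e = s(a, b) then t else 0, fun w hw => ?_⟩
    have hmem : s(a, b) ∈ G.incidenceFinset w ↔ w = a ∨ w = b := by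
      simp [mk'_mem_incidenceSet_iff, hab]
    simp only [Finset.sum_add_distrib, hx w hw, Finset.sum_ite_eq', hmem]
    have hne := hab.ne
    by_cases hwa : w = a <;> by_cases hwb : w = b <;> simp_all

theorem exists_sum_incidenceFinset_eq [Finite W] (hG : G.Preconnected) (r : W) (X : W → A) :
    ∃ x : Sym2 W → A, ∀ w ≠ r, ∑ e ∈ G.incidenceFinset w, x e = X w := by
  cases nonempty_fintype W
  choose x hx using fun v => exists_sum_incidenceFinset_eq_ite (hG v r).some (X v)
  refine ⟨∑ v, x v, fun w hw => ?_⟩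
  simp only [Finset.sum_apply]
  rw [Finset.sum_comm]
  simp [hx _ w hw]

end EdgeWeights

open Classical in
theorem exists_le_odd_degree_iff {W : Type*} [Fintype W] {G : SimpleGraph W}
    (hG : G.Preconnected) (r : W) (S : Set W) :
    ∃ F ≤ G, ∀ w ≠ r, (Odd (F.degree w) ↔ w ∈ S) := by
  obtain ⟨x, hx⟩ :=
    exists_sum_incidenceFinset_eq hG r fun w => if w ∈ S then (1 : ZMod 2) else 0
  obtain ⟨F, hFG, hF⟩ : ∃ F ≤ G, ∀ e, e ∈ F.edgeSet ↔ e ∈ G.edgeSet ∧ x e ≠ 0 :=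
    ⟨G.deleteEdges {e | x e = 0}, G.deleteEdges_le _, by simp⟩
  refine ⟨F, hFG, fun w hw => ?_⟩
  have hinc : F.incidenceFinset w = {e ∈ G.incidenceFinset w | x e ≠ 0} := by
    ext e
    simp [incidenceSet, hF, and_right_comm]
  have hdeg : (F.degree w : ZMod 2) = ∑ e ∈ G.incidenceFinset w, x e := by
    rw [← card_incidenceFinset_eq_degree, hinc, Finset.natCast_card_filter]
    exact Finset.sum_congr rfl fun e _ => by generalize x e = y; revert y; decide
  rw [← ZMod.natCast_eq_one_iff_odd, hdeg, hx w hw]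
  simp

section OddAt

variable {G : SimpleGraph V} [DecidableRel G.Adj] {k : ℕ} {v : V}

theorem colorCount_congr {f g : Sym2 V → Fin k} (hfg : ∀ e ∈ G.incidenceSet v, f e = g e)
    (i : Fin k) : colorCount G f v i = colorCount G g v i := by
  unfold colorCount
  rw [Finset.filter_congr fun e he => by rw [hfg e (by simpa using he)]]

theorem OddAt.congr {f g : Sym2 V → Fin k} (hf : OddAt G f v)
    (hfg : ∀ e ∈ G.incidenceSet v, f e = g e) : OddAt G g v :=
  fun i => colorCount_congr hfg i ▸ hf i

theorem OddAt.comp_injective {m : ℕ} {f : Sym2 V → Fin k} {φ : Fin k → Fin m} (hf : OddAt G f v)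
    (hφ : Function.Injective φ) : OddAt G (φ ∘ f) v := by
  intro i
  by_cases hi : ∃ j, φ j = i
  · obtain ⟨j, rfl⟩ := hi
    simpa [colorCount, hφ.eq_iff] using hf j
  · left
    simp_all [colorCount]

theorem exists_isOddColoring_of_local {g : V → Sym2 V → Fin k} (hodd : ∀ v, OddAt G (g v) v)
    (hagree : ∀ a b, G.Adj a b → g a s(a, b) = g b s(a, b)) :
    ∃ f : Sym2 V → Fin k, IsOddColoring G f := by
  refine ⟨fun e => g e.out.1 e, fun v => (hodd v).congr fun e he => ?_⟩
  obtain ⟨w, rfl⟩ := Sym2.mem_iff_exists.1 he.2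
  rcases Sym2.mem_iff.1 (Sym2.out_fst_mem s(v, w)) with h | h
  · rw [h]
  · rw [h, hagree v w he.1]

theorem exists_oddAt_two (G : SimpleGraph V) [DecidableRel G.Adj] (v : V) :
    ∃ f : Sym2 V → Fin 2, OddAt G f v := by
  rcases (G.incidenceFinset v).eq_empty_or_nonempty with hv | ⟨e₀, he₀⟩
  · exact ⟨0, fun i => by simp [colorCount, hv]⟩
  rcases Nat.even_or_odd (#(G.incidenceFinset v)) with heven | hodd
  · refine ⟨fun e => if e = e₀ then 1 else 0, fun i => Or.inr ?_⟩
    fin_cases i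
    · have herase : {e ∈ G.incidenceFinset v | e ≠ e₀} = (G.incidenceFinset v).erase e₀ := by grind
      simpa [colorCount, herase, he₀] using
        Nat.Even.sub_odd (Finset.card_pos.2 ⟨e₀, he₀⟩) heven odd_one
    · simp [colorCount, Finset.filter_eq', he₀]
  · refine ⟨0, fun i => ?_⟩
    fin_cases i <;> simp_all [colorCount]

theorem exists_isOddColoring_two_of_isAcyclic (hG : G.IsAcyclic) :
    ∃ f : Sym2 V → Fin 2, IsOddColoring G f := by
  choose g hg using exists_oddAt_two G
  obtain ⟨c, hc⟩ := exists_potential_of_isAcyclic hG (h := fun a b => g a s(a, b) - g b s(a, b))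
    fun a b => by rw [Sym2.eq_swap, neg_sub]
  refine exists_isOddColoring_of_local (g := fun a e => c a + g a e)
    (fun a => (hg a).comp_injective (add_right_injective (c a))) fun a b hab => ?_
  simp [hc a b hab, add_assoc]

/-- The edge-coloring that agrees with `f` on the subgraph `F` and gives every other edge one new
color, encoded as `Fin.last k`. -/
def extendByNewColor {W : Type*} (F : SimpleGraph W) [DecidableRel F.Adj] (f : Sym2 W → Fin k)
    (e : Sym2 W) : Fin (k + 1) :=
  if e ∈ F.edgeSet then (f e).castSucc else Fin.last k

section Extend

variable {F : SimpleGraph V} [DecidableRel F.Adj]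

theorem filter_incidenceFinset_mem_edgeSet (hFG : F ≤ G) (v : V) :
    {e ∈ G.incidenceFinset v | e ∈ F.edgeSet} = F.incidenceFinset v := by
  ext e
  have hmono : e ∈ F.edgeSet → e ∈ G.edgeSet := fun he => edgeSet_mono hFG he
  simp only [mem_filter, mem_incidenceFinset, incidenceSet, Set.mem_ofPred_eq]
  tauto

theorem colorCount_extendByNewColor_castSucc (hFG : F ≤ G) (f : Sym2 V → Fin k) (v : V)
    (i : Fin k) :
    colorCount G (extendByNewColor F f) v i.castSucc = colorCount F f v i := by
  unfold colorCount extendByNewColor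
  rw [← filter_incidenceFinset_mem_edgeSet hFG, Finset.filter_filter]
  congr! 2 with e
  by_cases he : e ∈ F.edgeSet <;> simp [he, (Fin.castSucc_ne_last _).symm]

theorem colorCount_extendByNewColor_last_add_degree (hFG : F ≤ G) (f : Sym2 V → Fin k) (v : V) :
    colorCount G (extendByNewColor F f) v (Fin.last k) + F.degree v = G.degree v := by
  have hlast : colorCount G (extendByNewColor F f) v (Fin.last k) =
      #{e ∈ G.incidenceFinset v | e ∉ F.edgeSet} := by
    unfold colorCount extendByNewColor
    congr! 2 with e
    by_cases he : e ∈ F.edgeSet <;> simp [he, Fin.castSucc_ne_last]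
  rw [hlast, ← card_incidenceFinset_eq_degree, ← card_incidenceFinset_eq_degree,
    ← filter_incidenceFinset_mem_edgeSet hFG, add_comm, Finset.card_filter_add_card_filter_not]

theorem OddAt.extendByNewColor (hFG : F ≤ G) {f : Sym2 V → Fin k} (hf : OddAt F f v)
    (hv : Odd (G.degree v + F.degree v)) : OddAt G (extendByNewColor F f) v := by
  intro i
  induction i using Fin.lastCases with
  | last =>
    have hsum := colorCount_extendByNewColor_last_add_degree hFG f v
    grind
  | cast i =>
    rw [colorCount_extendByNewColor_castSucc hFG]
    exact hf i

end Extend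

theorem exists_oddAt_of_ne (hG : G.Connected) (z : V) :
    ∃ f : Sym2 V → Fin 3, ∀ w ≠ z, OddAt G f w := by
  classical
  obtain ⟨T, hTG, hT⟩ := hG.exists_isTree_le
  obtain ⟨F, hFT, hF⟩ :=
    exists_le_odd_degree_iff hT.connected.preconnected z {w | Even (G.degree w)}
  obtain ⟨f, hf⟩ := exists_isOddColoring_two_of_isAcyclic (hT.isAcyclic.anti hFT)
  refine ⟨extendByNewColor F f, fun w hw => (hf w).extendByNewColor (hFT.trans hTG) ?_⟩
  rw [Nat.odd_add', hF w hw, Set.mem_ofPred_eq]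

theorem exists_isOddColoring_of_isBridge {a b : V} (hab : G.IsBridge s(a, b))
    {f g : Sym2 V → Fin k} (hf : ∀ w ≠ b, OddAt G f w) (hg : ∀ w ≠ a, OddAt G g w) :
    ∃ f : Sym2 V → Fin k, IsOddColoring G f := by
  classical
  let side : Set V := {w | (G.deleteEdges {s(a, b)}).Reachable a w}
  have ha : a ∈ side := Reachable.refl a
  have hb : b ∉ side := isBridge_iff.1 hab
  let σ : Equiv.Perm (Fin k) := Equiv.swap (f s(a, b)) (g s(a, b))
  refine exists_isOddColoring_of_local (g := fun w => if w ∈ side then σ ∘ f else g)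
    (fun w => ?_) fun c d hcd => ?_
  · split_ifs with hw
    · exact (hf w (by grind)).comp_injective σ.injective
    · exact hg w (by grind)
  · by_cases he : s(c, d) = s(a, b)
    · have hσ : σ (f s(a, b)) = g s(a, b) := Equiv.swap_apply_left _ _
      simp only [he]
      split_ifs <;> simp [hσ]
    · have hcd' : (G.deleteEdges {s(a, b)}).Adj c d := by simp [hcd, he]
      have hside : c ∈ side ↔ d ∈ side :=
        ⟨fun h => h.trans hcd'.reachable, fun h => h.trans hcd'.symm.reachable⟩
      simp only [hside]

end OddAt

theorem bridge_oddChromIndex_le_three (G : SimpleGraph V) [DecidableRel G.Adj]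
    (hG : G.Connected) (e : Sym2 V) (he : G.IsBridge e) :
    oddChromIndex G ≤ 3 := by
  induction e with | h u v =>
  obtain ⟨f, hf⟩ := exists_oddAt_of_ne hG v
  obtain ⟨g, hg⟩ := exists_oddAt_of_ne hG u
  exact Nat.sInf_le (exists_isOddColoring_of_isBridge he hf hg)
end

section
/- Let G be a unicyclic graph with cycle C. Then χ'_o(G) = 3 if and only if the set {v ∈ V(C) : d_G(v) = 2} has odd size and the set {v ∈ V(C) : d_G(v) is even and d_G(v) ≠ 2} is empty; otherwise χ'_o(G) ≤ 2 (or χ'_o(G) ≤ 1 when G is odd). -/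
open SimpleGraph Finset

variable {V : Type*} [Fintype V] [DecidableEq V]

/-!
Being an odd coloring is a condition at each vertex separately, so colorings that agree on shared
edges can be glued. Off the cycle `C` the graph is a forest hanging from `C`: a coloring with at
least two colors that is odd at every vertex of `C` extends to an odd coloring of `G`, one vertex at
a time, because each new vertex is met with a single edge already colored.

Let `v` lie on `C`, and color the two edges of `C` at `v`. With two colors this extends to a
coloring odd at `v` if and only if `d(v) ≠ 2` when the two colors agree, and `d(v)` is even when
they differ. With three colors it always extends when they differ, so a proper 3-edge-coloring of
`C` gives `χ'_o(G) ≤ 3`. Going once around `C`, a 2-coloring switches color an even number of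
times, and every even set of vertices of `C` is the set of switches of some 2-coloring. Thus two
colors suffice if and only if some set `T` of even size satisfies
`{v ∈ C | d(v) = 2} ⊆ T ⊆ {v ∈ C | d(v) even}`, which fails exactly when both bounds coincide and
have odd size.
-/

section OddFibers

variable {α β : Type*} [DecidableEq β]

/-- The map `g` has odd fibers on `s` if every value it takes on `s` is taken an odd number of
times. With `s` the set of edges at a vertex, this is the local condition `OddAt`. -/
def HasOddFibers (s : Finset α) (g : α → β) : Prop :=
  ∀ b, #{a ∈ s | g a = b} = 0 ∨ Odd #{a ∈ s | g a = b}

lemma HasOddFibers.congr {s : Finset α} {g g' : α → β} (hg : HasOddFibers s g)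
    (h : Set.EqOn g' g s) : HasOddFibers s g' := by
  intro b
  rw [filter_congr fun a ha ↦ by rw [h ha]]
  exact hg b

lemma hasOddFibers_of_injOn {s : Finset α} {g : α → β} (hg : Set.InjOn g s) :
    HasOddFibers s g := by
  intro b
  have hle : #{a ∈ s | g a = b} ≤ 1 := by
    refine card_le_one.2 fun a ha a' ha' ↦ ?_
    rw [mem_filter] at ha ha'
    exact hg ha.1 ha'.1 (ha.2.trans ha'.2.symm)
  rcases Nat.le_one_iff_eq_zero_or_eq_one.1 hle with h | h <;> simp [h]

lemma hasOddFibers_const {s : Finset α} (hs : Odd #s) (b : β) : HasOddFibers s fun _ ↦ b := by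
  intro b'
  by_cases h : b = b' <;> simp [h, hs]

lemma HasOddFibers.comp_injective {γ : Type*} [DecidableEq γ] {s : Finset α} {g : α → β}
    (hg : HasOddFibers s g) {φ : β → γ} (hφ : φ.Injective) : HasOddFibers s (φ ∘ g) := by
  intro c
  by_cases hc : ∃ b, φ b = c
  · obtain ⟨b, rfl⟩ := hc
    simpa [hφ.eq_iff] using hg b
  · exact .inl <| card_filter_eq_zero_iff.2 fun a _ h ↦ hc ⟨g a, h⟩

lemma HasOddFibers.even_card_iff {s : Finset α} {g : α → β} (hg : HasOddFibers s g) :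
    Even #s ↔ Even #(s.image g) := by
  have hodd : ∀ b ∈ s.image g, Odd #{a ∈ s | g a = b} := fun b hb ↦
    (hg b).resolve_left fun h ↦ by
      obtain ⟨a, ha, hab⟩ := mem_image.1 hb
      exact card_filter_eq_zero_iff.1 h a ha hab
  rw [card_eq_sum_card_image g s, even_sum_iff_even_card_odd, filter_true_of_mem hodd]

lemma HasOddFibers.even_card_iff_of_injOn [Fintype β] {s t : Finset α} (hts : t ⊆ s)
    (ht : #t = Fintype.card β) {g : α → β} (hg : HasOddFibers s g) (hinj : Set.InjOn g t) :
    Even #s ↔ Even (Fintype.card β) := by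
  have himage : t.image g = univ :=
    eq_univ_of_card _ ((card_image_of_injOn hinj).trans ht)
  have himage' : s.image g = univ :=
    univ_subset_iff.1 (himage ▸ image_subset_image hts)
  rw [hg.even_card_iff, himage', card_univ]

lemma HasOddFibers.injOn_of_card_eq_two {s : Finset α} {g : α → β} (hg : HasOddFibers s g)
    (hs : #s = 2) : Set.InjOn g s := by
  have heven : Even #(s.image g) := hg.even_card_iff.1 (hs ▸ even_two)
  have hpos : 0 < #(s.image g) := by
    rw [card_pos, image_nonempty, ← card_pos, hs]
    exact two_pos
  have hle : #(s.image g) ≤ 2 := hs ▸ card_image_le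
  rw [Nat.even_iff] at heven
  exact card_image_iff.1 (by lia)

lemma HasOddFibers.piecewise_const [DecidableEq α] {s t : Finset α} {g : α → β} {b : β}
    (hts : t ⊆ s) (hg : HasOddFibers t g) (hb : ∀ a ∈ t, g a ≠ b) (hodd : Odd #(s \ t)) :
    HasOddFibers s (t.piecewise g fun _ ↦ b) := by
  intro c
  by_cases hc : c = b
  · have : {a ∈ s | t.piecewise g (fun _ ↦ b) a = c} = s \ t := by
      ext a
      by_cases ha : a ∈ t <;> simp [ha, hc, hb]
    exact .inr (this ▸ hodd)
  · have : {a ∈ s | t.piecewise g (fun _ ↦ b) a = c} = {a ∈ t | g a = c} := by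
      ext a
      by_cases ha : a ∈ t <;> simp [ha, Ne.symm hc, @hts a]
    exact this ▸ hg c

lemma hasOddFibers_piecewise_singleton [DecidableEq α] {s : Finset α} (hs : Even #s) {a : α}
    (ha : a ∈ s) {b c : β} (hbc : b ≠ c) :
    HasOddFibers s (({a} : Finset α).piecewise (fun _ ↦ b) fun _ ↦ c) := by
  have has : {a} ⊆ s := singleton_subset_iff.2 ha
  refine (hasOddFibers_const (by simp) b).piecewise_const has (fun _ _ ↦ hbc) ?_
  rw [card_sdiff_of_subset has, card_singleton]
  exact Nat.Even.sub_odd (card_pos.2 ⟨a, ha⟩) hs odd_one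

lemma exists_hasOddFibers_eqOn_of_const [Nontrivial β] {s t : Finset α} (hts : t ⊆ s)
    (hs : t = s → Odd #s) {c : α → β} {b : β} (hc : ∀ a ∈ t, c a = b) :
    ∃ g, HasOddFibers s g ∧ Set.EqOn g c t := by
  classical
  rcases Nat.even_or_odd #s with heven | hodd
  · obtain ⟨a, ha, hat⟩ := exists_of_ssubset <|
      hts.ssubset_of_ne fun h ↦ Nat.not_even_iff_odd.2 (hs h) heven
    obtain ⟨b', hb'⟩ := exists_ne b
    refine ⟨_, hasOddFibers_piecewise_singleton heven ha hb', fun a' ha' ↦ ?_⟩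
    have : a' ≠ a := by rintro rfl; exact hat ha'
    simp [this, hc a' ha']
  · exact ⟨_, hasOddFibers_const hodd b, fun a ha ↦ (hc a ha).symm⟩

lemma exists_hasOddFibers_eqOn_of_injOn [Fintype β] {s t : Finset α} (hts : t ⊆ s)
    (ht : #t = 2) {c : α → β} (hc : Set.InjOn c t) (hs : Even #s ∨ 3 ≤ Fintype.card β) :
    ∃ g, HasOddFibers s g ∧ Set.EqOn g c t := by
  classical
  rcases Nat.even_or_odd #s with heven | hodd
  · obtain ⟨a, a', hne, rfl⟩ := card_eq_two.1 ht
    have hcne : c a ≠ c a' := fun h ↦ hne (hc (by simp) (by simp) h)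
    refine ⟨_, hasOddFibers_piecewise_singleton heven (hts (by simp : a ∈ _)) hcne, ?_⟩
    rintro _ h
    simp only [coe_insert, coe_singleton, Set.mem_insert_iff, Set.mem_singleton_iff] at h
    rcases h with rfl | rfl <;> simp [hne.symm]
  · have hcard : #(t.image c) < #(univ : Finset β) := by
      have := hs.resolve_left (Nat.not_even_iff_odd.2 hodd)
      rw [card_univ]
      exact (card_image_le.trans ht.le).trans_lt this
    obtain ⟨b, -, hb⟩ := exists_mem_notMem_of_card_lt_card hcard
    refine ⟨_, (hasOddFibers_of_injOn hc).piecewise_const (b := b) hts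
      (fun a ha h ↦ hb (mem_image.2 ⟨a, ha, h⟩)) ?_, fun a ha ↦ ?_⟩
    · rw [card_sdiff_of_subset hts, ht]
      exact Nat.Odd.sub_even (ht ▸ card_le_card hts) hodd even_two
    · exact piecewise_eq_of_mem t _ _ ha

end OddFibers

section Extension

@[elab_as_elim]
lemma connected_insert_induction {G : SimpleGraph V} (hG : G.Connected) {P : Finset V → Prop}
    {S : Finset V} (hS : S.Nonempty) (univ : P univ)
    (insert : ∀ S : Finset V, ∀ v ∉ S, ∀ w ∈ S, G.Adj v w → P (insert v S) → P S) : P S := by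
  induction S using WellFoundedGT.induction with | ind S ih
  by_cases hne : S = Finset.univ
  · exact hne ▸ univ
  obtain ⟨s, hs⟩ := hS
  obtain ⟨t, ht⟩ := Set.ne_univ_iff_exists_notMem _ |>.1 (coe_eq_univ.not.2 hne)
  obtain ⟨p⟩ := hG.preconnected s t
  obtain ⟨d, -, hfst, hsnd⟩ := p.exists_boundary_dart (S : Set V) hs ht
  exact insert S d.snd hsnd d.fst hfst d.adj.symm
    (ih _ (ssubset_insert hsnd) (insert_nonempty _ _))

variable {G : SimpleGraph V} [DecidableRel G.Adj]

variable (G) in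
/-- The edges of `G` with both ends in `S`, that is, the edges of the subgraph induced on `S`,
kept as edges of `G` so that they can share a coloring with it. -/
def edgesWithin (S : Finset V) : Finset (Sym2 V) := G.edgeFinset ∩ S.sym2

lemma mem_edgesWithin {S : Finset V} {e : Sym2 V} :
    e ∈ edgesWithin G S ↔ e ∈ G.edgeSet ∧ ∀ v ∈ e, v ∈ S := by
  simp [edgesWithin]

lemma exists_forall_oddAt_of_local {k : ℕ} {S : Finset V} {c : Sym2 V → Fin k}
    (h : ∀ v ∈ S, ∃ g : Sym2 V → Fin k,
      OddAt G g v ∧ ∀ e ∈ edgesWithin G S, v ∈ e → g e = c e) :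
    ∃ f : Sym2 V → Fin k, ∀ v ∈ S, OddAt G f v := by
  classical
  choose g hodd hg using h
  refine ⟨fun e ↦ if h : e ∉ edgesWithin G S ∧ ∃ v ∈ S, v ∈ e
    then g h.2.choose h.2.choose_spec.1 e else c e,
    fun v hv ↦ HasOddFibers.congr (hodd v hv) fun e he ↦ ?_⟩
  rw [mem_coe, mem_incidenceFinset] at he
  split_ifs with h
  · obtain ⟨hu, hue⟩ := h.2.choose_spec
    have huv : h.2.choose = v := by
      by_contra huv
      have hee := (Sym2.mem_and_mem_iff huv).1 ⟨hue, he.2⟩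
      exact h.1 (mem_edgesWithin.2 ⟨he.1, hee ▸ by simp [hu, hv]⟩)
    congr!
  · have heS : e ∈ edgesWithin G S := by
      by_contra heS
      exact h ⟨heS, v, hv, he.2⟩
    exact (hg v hv e heS he.2).symm

lemma card_edgesWithin_add_le {S : Finset V} {v : V} (hv : v ∉ S) :
    #(edgesWithin G S) + #(G.neighborFinset v ∩ S) ≤ #(edgesWithin G (insert v S)) := by
  have hcard : #((G.neighborFinset v ∩ S).image fun w ↦ s(v, w)) = #(G.neighborFinset v ∩ S) :=
    card_image_of_injective _ fun _ _ ↦ Sym2.congr_right.1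
  rw [← hcard, ← card_union_of_disjoint]
  · refine card_le_card (union_subset (fun e he ↦ ?_) (image_subset_iff.2 fun w hw ↦ ?_))
    · rw [mem_edgesWithin] at he ⊢
      exact ⟨he.1, fun u hu ↦ mem_insert_of_mem (he.2 u hu)⟩
    · rw [mem_inter, mem_neighborFinset] at hw
      simp [mem_edgesWithin, hw]
  · refine disjoint_left.2 fun e he he' ↦ ?_
    obtain ⟨w, -, rfl⟩ := mem_image.1 he'
    exact hv ((mem_edgesWithin.1 he).2 v (Sym2.mem_mk_left v w))

lemma card_edgesWithin_add_card_compl_le (hG : G.Connected) {S : Finset V} (hS : S.Nonempty) :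
    #(edgesWithin G S) + #Sᶜ ≤ #G.edgeFinset := by
  refine connected_insert_induction hG hS ?_ fun S v hv w hw hvw ih ↦ ?_
  · simp [edgesWithin]
  · have hstep := card_edgesWithin_add_le (G := G) hv
    have hpos : 0 < #(G.neighborFinset v ∩ S) := card_pos.2 ⟨w, by simp [hw, hvw]⟩
    have hcompl : #(insert v S)ᶜ + 1 = #Sᶜ := by
      rw [compl_insert, card_erase_add_one (mem_compl.2 hv)]
    lia

/- Growing `S` to `univ` along edges adds at least one edge per vertex; `hcard` forces exactly one,
so each new vertex has a single edge to the old ones. -/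
lemma exists_isOddColoring_of_forall_mem (hG : G.Connected) {k : ℕ} (hk : 2 ≤ k) {S : Finset V}
    (hS : S.Nonempty) (hcard : #G.edgeFinset ≤ #(edgesWithin G S) + #Sᶜ)
    (h : ∃ f : Sym2 V → Fin k, ∀ v ∈ S, OddAt G f v) :
    ∃ f : Sym2 V → Fin k, IsOddColoring G f := by
  revert hcard h
  refine connected_insert_induction hG hS
    (fun _ ⟨f, hf⟩ ↦ ⟨f, fun v ↦ hf v (mem_univ v)⟩) fun S v hv w hw hvw ih hcard ⟨f, hf⟩ ↦ ?_
  have hw' : w ∈ G.neighborFinset v ∩ S := by simp [hw, hvw]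
  have hstep := card_edgesWithin_add_le (G := G) hv
  have hbound := card_edgesWithin_add_card_compl_le hG (insert_nonempty v S)
  have hcompl : #(insert v S)ᶜ + 1 = #Sᶜ := by
    rw [compl_insert, card_erase_add_one (mem_compl.2 hv)]
  have hunique : ∀ u ∈ S, G.Adj v u → u = w := fun u hu hvu ↦
    card_le_one.1 (by lia) u (by simp [hu, hvu]) w hw'
  have hpos : 0 < #(G.neighborFinset v ∩ S) := card_pos.2 ⟨w, hw'⟩
  refine ih (by lia) (exists_forall_oddAt_of_local (c := f) fun u hu ↦ ?_)
  rcases mem_insert.1 hu with rfl | hu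
  · have : Nontrivial (Fin k) := Fin.nontrivial_iff_two_le.2 hk
    have hsub : {s(u, w)} ⊆ G.incidenceFinset u := by simpa using hvw
    obtain ⟨g, hodd, hg⟩ := exists_hasOddFibers_eqOn_of_const (c := f) hsub
      (fun h ↦ by simp [← h]) (b := f s(u, w)) (by simp)
    refine ⟨g, hodd, fun e he hue ↦ ?_⟩
    rw [mem_edgesWithin] at he
    obtain ⟨z, rfl⟩ := hue
    have hz : z ∈ S := mem_of_mem_insert_of_ne (he.2 z (Sym2.mem_mk_right u z)) he.1.ne'
    obtain rfl := hunique z hz he.1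
    exact hg (by simp)
  · exact ⟨f, hf u hu, fun _ _ _ ↦ rfl⟩

end Extension

section Cycle

variable {W : Type*} {G : SimpleGraph W} {x : W} {C : G.Walk x x}

lemma mem_support_iff_exists_getVert_succ (hC : C.IsCycle) {v : W} :
    v ∈ C.support ↔ ∃ i < C.length, C.getVert (i + 1) = v := by
  rw [Walk.mem_support_iff_exists_getVert]
  refine ⟨?_, fun ⟨i, hi, h⟩ ↦ ⟨i + 1, h, hi⟩⟩
  rintro ⟨_ | i, rfl, hi⟩
  · have := hC.three_le_length
    exact ⟨C.length - 1, by lia, by rw [Nat.sub_add_cancel (by lia)]; simp⟩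
  · exact ⟨i, hi, rfl⟩

variable [DecidableEq W]

/-- The edges of the walk `p` that are incident to `v`; if `p` is a cycle through `v`, there are
two of them. -/
def walkEdgesAt {u w : W} (p : G.Walk u w) (v : W) : Finset (Sym2 W) :=
  {e ∈ p.edges.toFinset | v ∈ e}

lemma walkEdgesAt_getVert_succ (hC : C.IsCycle) {i j : ℕ} (hi : i < C.edges.length)
    (hj : j < C.edges.length) (hij : C.getVert j = C.getVert (i + 1)) :
    walkEdgesAt C (C.getVert (i + 1)) = {C.edges[i], C.edges[j]} := by
  ext e
  simp only [walkEdgesAt, mem_filter, List.mem_toFinset, mem_insert, mem_singleton,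
    List.mem_iff_getElem]
  rw [Walk.length_edges] at hi hj
  constructor
  · rintro ⟨⟨l, hl, rfl⟩, hmem⟩
    rw [Walk.getElem_edges, Sym2.mem_iff] at hmem
    rw [Walk.length_edges] at hl
    rcases hmem with h | h
    · obtain rfl : l = j := hC.getVert_injOn' (by simp; lia) (by simp; lia) (hij.trans h).symm
      exact .inr rfl
    · obtain rfl : l = i := by
        simpa using hC.getVert_injOn (by simp; lia) (by simp; lia) h.symm
      exact .inl rfl
  · rintro (rfl | rfl)
    · exact ⟨⟨i, _, rfl⟩, by simp [Walk.getElem_edges]⟩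
    · exact ⟨⟨j, _, rfl⟩, by simp [Walk.getElem_edges, hij]⟩

lemma exists_walkEdgesAt_eq_pair (hC : C.IsCycle) {i : ℕ} (hi : i < C.edges.length) :
    ∃ (j : ℕ) (hj : j < C.edges.length), (j = i + 1 ∨ i + 1 = C.length ∧ j = 0) ∧
      C.edges[i] ≠ C.edges[j] ∧ walkEdgesAt C (C.getVert (i + 1)) = {C.edges[i], C.edges[j]} := by
  have h3 := hC.three_le_length
  have hlen := C.length_edges
  obtain ⟨j, hj, hji, hvert⟩ : ∃ j < C.edges.length,
      (j = i + 1 ∨ i + 1 = C.length ∧ j = 0) ∧ C.getVert j = C.getVert (i + 1) := by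
    rcases (Nat.succ_le_of_lt hi).lt_or_eq with h | h
    · exact ⟨i + 1, h, .inl rfl, rfl⟩
    · have hi : i + 1 = C.length := h.trans hlen
      exact ⟨0, by lia, .inr ⟨hi, rfl⟩, by simp [hi]⟩
  refine ⟨j, hj, hji, fun h ↦ ?_, walkEdgesAt_getVert_succ hC hi hj hvert⟩
  have := hC.edges_nodup.getElem_inj_iff.1 h
  lia

lemma card_walkEdgesAt (hC : C.IsCycle) {v : W} (hv : v ∈ C.support) : #(walkEdgesAt C v) = 2 := by
  obtain ⟨i, hi, rfl⟩ := (mem_support_iff_exists_getVert_succ hC).1 hv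
  obtain ⟨j, hj, -, hne, hpair⟩ := exists_walkEdgesAt_eq_pair hC (C.length_edges.symm ▸ hi)
  rw [hpair, card_pair hne]

lemma exists_injOn_walkEdgesAt_iff {β : Type*} (hC : C.IsCycle) {a : ℕ → β}
    (ha : a C.length = a 0) :
    ∃ c : Sym2 W → β, ∀ i < C.length,
      (Set.InjOn c (walkEdgesAt C (C.getVert (i + 1))) ↔ a i ≠ a (i + 1)) := by
  refine ⟨a ∘ C.edges.idxOf, fun i hi ↦ ?_⟩
  obtain ⟨j, hj, hji, hne, hpair⟩ := exists_walkEdgesAt_eq_pair hC (C.length_edges.symm ▸ hi)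
  have haj : a j = a (i + 1) := by
    rcases hji with rfl | ⟨h, rfl⟩
    · rfl
    · rw [h, ha]
  rw [hpair]
  simp [hC.edges_nodup.idxOf_getElem, haj, hne]

lemma count_getVert_succ_mem (hC : C.IsCycle) {T : Finset W} (hT : T ⊆ C.support.toFinset) :
    Nat.count (fun i ↦ C.getVert (i + 1) ∈ T) C.length = #T := by
  rw [Nat.count_eq_card_filter_range]
  refine card_bij (fun i _ ↦ C.getVert (i + 1)) (fun i hi ↦ (mem_filter.1 hi).2)
    (fun i hi j hj h ↦ ?_) fun v hv ↦ ?_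
  · simp only [mem_filter, mem_range] at hi hj
    simpa using hC.getVert_injOn (by simp; lia) (by simp; lia) h
  · obtain ⟨i, hi, rfl⟩ := (mem_support_iff_exists_getVert_succ hC).1 (List.mem_toFinset.1 (hT hv))
    exact ⟨i, by simp [hi, hv], rfl⟩

lemma exists_two_coloring_injOn_walkEdgesAt_iff (hC : C.IsCycle) {T : Finset W}
    (hT : T ⊆ C.support.toFinset) (heven : Even #T) :
    ∃ c : Sym2 W → Fin 2, ∀ v ∈ C.support, Set.InjOn c (walkEdgesAt C v) ↔ v ∈ T := by
  obtain ⟨c, hc⟩ := exists_injOn_walkEdgesAt_iff hC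
    (a := fun i ↦ Fin.ofNat 2 (Nat.count (fun j ↦ C.getVert (j + 1) ∈ T) i)) <| by
      rw [count_getVert_succ_mem hC hT]
      simpa [Fin.ext_iff] using Nat.even_iff.1 heven
  refine ⟨c, fun v hv ↦ ?_⟩
  obtain ⟨i, hi, rfl⟩ := (mem_support_iff_exists_getVert_succ hC).1 hv
  rw [hc i hi, Nat.count_succ, ne_eq, Fin.ext_iff, Fin.val_ofNat, Fin.val_ofNat]
  split_ifs with h <;> simp only [h, iff_true, iff_false] <;> lia

lemma exists_three_coloring_injOn_walkEdgesAt (hC : C.IsCycle) :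
    ∃ c : Sym2 W → Fin 3, ∀ v ∈ C.support, Set.InjOn c (walkEdgesAt C v) := by
  have h3 := hC.three_le_length
  obtain ⟨c, hc⟩ := exists_injOn_walkEdgesAt_iff hC
    (a := fun i ↦ if i = 0 ∨ i = C.length then 2 else Fin.ofNat 3 (i % 2)) (by simp)
  refine ⟨c, fun v hv ↦ ?_⟩
  obtain ⟨i, hi, rfl⟩ := (mem_support_iff_exists_getVert_succ hC).1 hv
  rw [hc i hi]
  rw [ne_eq, Fin.ext_iff, apply_ite Fin.val, apply_ite Fin.val, Fin.val_ofNat, Fin.val_ofNat,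
    Fin.val_two]
  split_ifs <;> lia

lemma even_card_injOn_walkEdgesAt (hC : C.IsCycle) (c : Sym2 W → Fin 2)
    [DecidablePred fun v ↦ Set.InjOn c (walkEdgesAt C v)] :
    Even #{v ∈ C.support.toFinset | Set.InjOn c (walkEdgesAt C v)} := by
  have hodd : ∀ v ∈ C.support.toFinset,
      Set.InjOn c (walkEdgesAt C v) ↔ Odd (∑ e ∈ walkEdgesAt C v, (c e : ℕ)) := by
    intro v hv
    obtain ⟨e, e', hne, hpair⟩ := card_eq_two.1 (card_walkEdgesAt hC (List.mem_toFinset.1 hv))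
    rw [hpair, sum_pair hne]
    simp only [coe_insert, coe_singleton, Set.injOn_pair, hne, imp_false, Nat.odd_iff]
    lia
  have hends : ∀ e ∈ C.edges.toFinset, #{v ∈ C.support.toFinset | v ∈ e} = 2 := by
    intro e he
    rw [List.mem_toFinset] at he
    have : {v ∈ C.support.toFinset | v ∈ e} = e.toFinset := by
      ext v
      simpa using fun hv ↦ C.mem_support_of_mem_edges he hv
    rw [this, Sym2.card_toFinset_of_not_isDiag _
      (G.not_isDiag_of_mem_edgeSet (C.edges_subset_edgeSet he))]
  have hsum : ∑ v ∈ C.support.toFinset, ∑ e ∈ walkEdgesAt C v, (c e : ℕ)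
      = ∑ e ∈ C.edges.toFinset, 2 * (c e : ℕ) := by
    calc _ = ∑ e ∈ C.edges.toFinset, ∑ v ∈ C.support.toFinset with v ∈ e, (c e : ℕ) :=
          sum_comm' fun v e ↦ by simp only [walkEdgesAt, mem_filter]; tauto
      _ = _ := sum_congr rfl fun e he ↦ by rw [sum_const, hends e he, smul_eq_mul]
  rw [filter_congr hodd, ← even_sum_iff_even_card_odd, hsum, ← mul_sum]
  exact even_two_mul _

lemma card_support_toFinset_le (hC : C.IsCycle) : #C.support.toFinset ≤ C.length := by
  calc #C.support.toFinset ≤ #((range C.length).image fun i ↦ C.getVert (i + 1)) :=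
        card_le_card fun v hv ↦ by
          simpa [mem_support_iff_exists_getVert_succ hC] using hv
    _ ≤ C.length := card_image_le.trans (card_range _).le

end Cycle

lemma exists_even_card_between_iff {α : Type*} {A B : Finset α} (hAB : A ⊆ B) :
    (∃ T, A ⊆ T ∧ T ⊆ B ∧ Even #T) ↔ ¬(Odd #A ∧ A = B) := by
  refine ⟨fun ⟨T, hAT, hTB, hT⟩ ⟨hA, h⟩ ↦ ?_, fun h ↦ ?_⟩
  · obtain rfl := hAT.antisymm (h ▸ hTB)
    exact Nat.not_even_iff_odd.2 hA hT
  · rcases Nat.even_or_odd #A with hA | hA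
    · exact ⟨A, subset_rfl, hAB, hA⟩
    · obtain ⟨b, hb, hbA⟩ := exists_of_ssubset <| hAB.ssubset_of_ne fun h' ↦ h ⟨hA, h'⟩
      refine ⟨A.cons b hbA, subset_cons hbA, cons_subset.2 ⟨hb, hAB⟩, ?_⟩
      rw [card_cons]
      exact hA.add_one

section OddChromIndex

variable {G : SimpleGraph V} [DecidableRel G.Adj]

lemma exists_isOddColoring (G : SimpleGraph V) [DecidableRel G.Adj] :
    ∃ (k : ℕ) (f : Sym2 V → Fin k), IsOddColoring G f :=
  ⟨_, Fintype.equivFin (Sym2 V), fun _ ↦ hasOddFibers_of_injOn (Equiv.injective _).injOn⟩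

lemma oddChromIndex_le_iff {k : ℕ} :
    oddChromIndex G ≤ k ↔ ∃ f : Sym2 V → Fin k, IsOddColoring G f := by
  refine ⟨fun hk ↦ ?_, fun hf ↦ Nat.sInf_le hf⟩
  obtain ⟨f, hf⟩ : ∃ f : Sym2 V → Fin (oddChromIndex G), IsOddColoring G f :=
    Nat.sInf_mem (exists_isOddColoring G)
  exact ⟨Fin.castLE hk ∘ f,
    fun v ↦ HasOddFibers.comp_injective (hf v) (Fin.castLE_injective hk)⟩

end OddChromIndex

section Unicyclic

variable {G : SimpleGraph V} [DecidableRel G.Adj] {x : V} {C : G.Walk x x}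

lemma walkEdgesAt_subset_incidenceFinset {u w : V} (p : G.Walk u w) (v : V) :
    walkEdgesAt p v ⊆ G.incidenceFinset v := by
  intro e he
  rw [walkEdgesAt, mem_filter, List.mem_toFinset] at he
  exact (mem_incidenceFinset ..).2 ⟨p.edges_subset_edgeSet he.1, he.2⟩

lemma edgesWithin_support_eq_edges (hG : G.Connected) (hUni : #G.edgeFinset = Fintype.card V)
    (hC : C.IsCycle) : edgesWithin G C.support.toFinset = C.edges.toFinset := by
  refine (eq_of_subset_of_card_le (fun e he ↦ ?_) ?_).symm
  · rw [List.mem_toFinset] at he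
    exact mem_edgesWithin.2 ⟨C.edges_subset_edgeSet he,
      fun v hv ↦ List.mem_toFinset.2 (C.mem_support_of_mem_edges he hv)⟩
  · rw [List.toFinset_card_of_nodup hC.edges_nodup, C.length_edges]
    have hbound := card_edgesWithin_add_card_compl_le (S := C.support.toFinset) hG ⟨x, by simp⟩
    have hcompl := card_add_card_compl C.support.toFinset
    have hlen := card_support_toFinset_le hC
    lia

lemma exists_isOddColoring_of_cycle (hG : G.Connected) (hUni : #G.edgeFinset = Fintype.card V)
    (hC : C.IsCycle) {k : ℕ} (hk : 2 ≤ k) (c : Sym2 V → Fin k)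
    (hinj : ∀ v ∈ C.support, Set.InjOn c (walkEdgesAt C v) → Even (G.degree v) ∨ 3 ≤ k)
    (hninj : ∀ v ∈ C.support, ¬Set.InjOn c (walkEdgesAt C v) → G.degree v ≠ 2) :
    ∃ f : Sym2 V → Fin k, IsOddColoring G f := by
  have hedges := edgesWithin_support_eq_edges hG hUni hC
  refine exists_isOddColoring_of_forall_mem hG hk (S := C.support.toFinset) ⟨x, by simp⟩ ?_ <|
    exists_forall_oddAt_of_local (c := c) fun v hv ↦ ?_
  · have hcompl := card_add_card_compl C.support.toFinset
    have hlen := card_support_toFinset_le hC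
    rw [hedges, List.toFinset_card_of_nodup hC.edges_nodup, C.length_edges]
    lia
  · rw [List.mem_toFinset] at hv
    have hsub := walkEdgesAt_subset_incidenceFinset C v
    have hcard := card_walkEdgesAt hC hv
    suffices ∃ g, HasOddFibers (G.incidenceFinset v) g ∧ Set.EqOn g c (walkEdgesAt C v) by
      obtain ⟨g, hodd, hg⟩ := this
      refine ⟨g, hodd, fun e he hve ↦ hg ?_⟩
      exact mem_filter.2 ⟨hedges ▸ he, hve⟩
    by_cases h : Set.InjOn c (walkEdgesAt C v)
    · refine exists_hasOddFibers_eqOn_of_injOn hsub hcard h ?_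
      simpa using hinj v hv h
    · have : Nontrivial (Fin k) := Fin.nontrivial_iff_two_le.2 hk
      obtain ⟨e, e', hne, hpair⟩ := card_eq_two.1 hcard
      have hc : c e = c e' := by simpa [hpair, hne] using h
      refine exists_hasOddFibers_eqOn_of_const hsub (fun heq ↦ ?_) (b := c e) (by simp [hpair, hc])
      exact absurd (by rw [← G.card_incidenceFinset_eq_degree, ← heq, hcard]) (hninj v hv h)

lemma exists_isOddColoring_three (hG : G.Connected) (hUni : #G.edgeFinset = Fintype.card V)
    (hC : C.IsCycle) : ∃ f : Sym2 V → Fin 3, IsOddColoring G f := by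
  obtain ⟨c, hc⟩ := exists_three_coloring_injOn_walkEdgesAt hC
  exact exists_isOddColoring_of_cycle hG hUni hC (by lia) c (fun _ _ _ ↦ .inr le_rfl)
    fun v hv h ↦ absurd (hc v hv) h

lemma exists_isOddColoring_two_iff (hG : G.Connected) (hUni : #G.edgeFinset = Fintype.card V)
    (hC : C.IsCycle) :
    (∃ f : Sym2 V → Fin 2, IsOddColoring G f) ↔
      ∃ T : Finset V, {v ∈ C.support.toFinset | G.degree v = 2} ⊆ T ∧
        T ⊆ {v ∈ C.support.toFinset | Even (G.degree v)} ∧ Even #T := by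
  constructor
  · classical
    rintro ⟨f, hf⟩
    refine ⟨{v ∈ C.support.toFinset | Set.InjOn f (walkEdgesAt C v)}, fun v hv ↦ ?_,
      fun v hv ↦ ?_, even_card_injOn_walkEdgesAt hC f⟩
    all_goals
      rw [mem_filter] at hv ⊢
      refine ⟨hv.1, ?_⟩
      have hsub := walkEdgesAt_subset_incidenceFinset C v
    · refine (HasOddFibers.injOn_of_card_eq_two (hf v) ?_).mono hsub
      rw [card_incidenceFinset_eq_degree, hv.2]
    · rw [← card_incidenceFinset_eq_degree]
      have hcard := card_walkEdgesAt hC (List.mem_toFinset.1 hv.1)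
      exact (HasOddFibers.even_card_iff_of_injOn hsub (by simpa) (hf v) hv.2).2 (by simp)
  · rintro ⟨T, hdeg, hT, heven⟩
    obtain ⟨c, hc⟩ :=
      exists_two_coloring_injOn_walkEdgesAt_iff hC (hT.trans (filter_subset ..)) heven
    refine exists_isOddColoring_of_cycle hG hUni hC le_rfl c
      (fun v hv h ↦ .inl (mem_filter.1 (hT ((hc v hv).1 h))).2) fun v hv h hv2 ↦ ?_
    exact h <| (hc v hv).2 <| hdeg <| by simp [hv, hv2]

end Unicyclic

theorem unicyclic_oddChromIndex_characterization (G : SimpleGraph V) [DecidableRel G.Adj]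
    (hG : G.Connected) (hUni : G.edgeFinset.card = Fintype.card V)
    (x : V) (C : G.Walk x x) (hC : C.IsCycle) :
    oddChromIndex G ≤ 3 ∧
      (oddChromIndex G = 3 ↔
        Odd ((C.support.toFinset.filter (fun v => G.degree v = 2)).card) ∧
        (∀ v ∈ C.support, Even (G.degree v) → G.degree v = 2)) := by
  have hthree : oddChromIndex G ≤ 3 :=
    oddChromIndex_le_iff.2 (exists_isOddColoring_three hG hUni hC)
  have hsub : {v ∈ C.support.toFinset | G.degree v = 2} ⊆
      {v ∈ C.support.toFinset | Even (G.degree v)} :=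
    monotone_filter_right _ fun v _ hv ↦ hv ▸ even_two
  have heq : {v ∈ C.support.toFinset | G.degree v = 2} =
        {v ∈ C.support.toFinset | Even (G.degree v)} ↔
      ∀ v ∈ C.support, Even (G.degree v) → G.degree v = 2 := by
    rw [filter_inj']
    exact ⟨fun h v hv ↦ (h (List.mem_toFinset.2 hv)).2, fun h v hv ↦
      ⟨fun h2 ↦ h2 ▸ even_two, h v (List.mem_toFinset.1 hv)⟩⟩
  refine ⟨hthree, ?_⟩
  calc oddChromIndex G = 3 ↔ ¬oddChromIndex G ≤ 2 := by lia
    _ ↔ _ := by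
      rw [oddChromIndex_le_iff, exists_isOddColoring_two_iff hG hUni hC,
        exists_even_card_between_iff hsub, not_not, heq]
end
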